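/- Let g₁, g₂ : ℝ → [0,∞) be nondecreasing and ψ₁, ψ₂ ∈ ℝ. Then the function F(p,q) = g₁(p)·((p + ψ₁) − (q + ψ₂))⁺ − g₂(q)·((q + ψ₂) − (p + ψ₁))⁺, where x⁺ = max(x,0), is nondecreasing in p for every fixed q and nonincreasing in q for every fixed p. -/

import Mathlib

noncomputable section

section UpwindFlux

variable {R : Type*} [Ring R] [Lattice R]

/-- The upwind numerical flux between two cells with mobilities `a`, `b` and hydraulic heads
`u`, `v`: each nonnegative part of the head difference is weighted by the mobility of the cell
that the fluid leaves. -/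
def upwindFlux (a b u v : R) : R :=
  a * (u - v)⁺ - b * (v - u)⁺

theorem neg_upwindFlux (a b u v : R) : -upwindFlux a b u v = upwindFlux b a v u :=
  neg_sub _ _

variable [IsOrderedRing R]

theorem upwindFlux_le_upwindFlux_left {a a' b u u' : R} (ha : a ≤ a') (hu : u ≤ u')
    (ha' : 0 ≤ a') (hb : 0 ≤ b) (v : R) : upwindFlux a b u v ≤ upwindFlux a' b u' v := by
  have outflow_le : a * (u - v)⁺ ≤ a' * (u' - v)⁺ :=
    mul_le_mul ha (posPart_mono (sub_le_sub_right hu v)) (posPart_nonneg _) ha'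
  have inflow_le : b * (v - u')⁺ ≤ b * (v - u)⁺ :=
    mul_le_mul_of_nonneg_left (posPart_mono (sub_le_sub_left hu v)) hb
  exact sub_le_sub outflow_le inflow_le

theorem monotone_upwindFlux {α : Type*} [Preorder α] {g h : α → R} (hg : Monotone g)
    (hh : Monotone h) (hg0 : ∀ x, 0 ≤ g x) {b : R} (hb : 0 ≤ b) (v : R) :
    Monotone fun p => upwindFlux (g p) b (h p) v :=
  fun _ p' hp => upwindFlux_le_upwindFlux_left (hg hp) (hh hp) (hg0 p') hb v

theorem upwind_flux_monotone_general {α β : Type*} [Preorder α] [Preorder β]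
    {g₁ h₁ : α → R} {g₂ h₂ : β → R} (hg₁ : Monotone g₁) (hg₂ : Monotone g₂)
    (hg₁0 : ∀ x, 0 ≤ g₁ x) (hg₂0 : ∀ x, 0 ≤ g₂ x) (hh₁ : Monotone h₁) (hh₂ : Monotone h₂) :
    (∀ q, Monotone fun p => upwindFlux (g₁ p) (g₂ q) (h₁ p) (h₂ q)) ∧
      ∀ p, Antitone fun q => upwindFlux (g₁ p) (g₂ q) (h₁ p) (h₂ q) := by
  refine ⟨fun q => monotone_upwindFlux hg₁ hh₁ hg₁0 (hg₂0 q) (h₂ q), fun p => ?_⟩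
  simpa only [neg_upwindFlux] using (monotone_upwindFlux hg₂ hh₂ hg₂0 (hg₁0 p) (h₁ p)).neg

end UpwindFlux

/-- monotonicity of the upwind numerical flux. Let `g₁, g₂ : ℝ → [0,∞)` be
nondecreasing and `ψ₁, ψ₂ ∈ ℝ`. Then the upwind flux
`F(p,q) = g₁(p) ((p+ψ₁) - (q+ψ₂))⁺ - g₂(q) ((q+ψ₂) - (p+ψ₁))⁺` is nondecreasing in `p` for fixed
`q` and nonincreasing in `q` for fixed `p`. -/
theorem upwind_flux_monotone
    (g₁ g₂ : ℝ → ℝ) (hg₁ : Monotone g₁) (hg₂ : Monotone g₂)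
    (hg₁0 : ∀ x, 0 ≤ g₁ x) (hg₂0 : ∀ x, 0 ≤ g₂ x) (ψ₁ ψ₂ : ℝ) :
    (∀ q : ℝ, Monotone (fun p : ℝ =>
      g₁ p * max ((p + ψ₁) - (q + ψ₂)) 0 - g₂ q * max ((q + ψ₂) - (p + ψ₁)) 0)) ∧
    (∀ p : ℝ, Antitone (fun q : ℝ =>
      g₁ p * max ((p + ψ₁) - (q + ψ₂)) 0 - g₂ q * max ((q + ψ₂) - (p + ψ₁)) 0)) :=
  upwind_flux_monotone_general hg₁ hg₂ hg₁0 hg₂0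
    (monotone_id.add_const ψ₁) (monotone_id.add_const ψ₂)
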